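/- arXiv:0805.2494 — 2 statements merged into one kernel-verified Lean document; each statement's English description precedes it below -/
import Mathlib

section
/- Suppose n_a = n_b = n_c = n_d = 2. Then the element a b of the rectangle group R has infinite order; that is, the amalgamating subgroup C = ⟨a b⟩ is infinite cyclic. -/
/-- The defining relations of the rectangle group `R(n_a, n_b, n_c, n_d)`:
generators `a, b, c, d` (indexed `0, 1, 2, 3`), relations
`a^{n_a} = b^{n_b} = c^{n_c} = d^{n_d} = 1`, `b a⁻¹ = d c⁻¹`, `c a⁻¹ = d b⁻¹`. -/
def rectRels (na nb nc nd : ℕ) : Set (FreeGroup (Fin 4)) :=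
  {FreeGroup.of 0 ^ na, FreeGroup.of 1 ^ nb, FreeGroup.of 2 ^ nc, FreeGroup.of 3 ^ nd,
    FreeGroup.of 1 * (FreeGroup.of 0)⁻¹ * (FreeGroup.of 3 * (FreeGroup.of 2)⁻¹)⁻¹,
    FreeGroup.of 2 * (FreeGroup.of 0)⁻¹ * (FreeGroup.of 3 * (FreeGroup.of 1)⁻¹)⁻¹}

/-- The rectangle group. -/
abbrev RectGroup (na nb nc nd : ℕ) : Type := PresentedGroup (rectRels na nb nc nd)

/-- The generator `a` of the rectangle group. -/
def Ra (na nb nc nd : ℕ) : RectGroup na nb nc nd := PresentedGroup.of 0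
/-- The generator `b` of the rectangle group. -/
def Rb (na nb nc nd : ℕ) : RectGroup na nb nc nd := PresentedGroup.of 1
/-- The generator `c` of the rectangle group. -/
def Rc (na nb nc nd : ℕ) : RectGroup na nb nc nd := PresentedGroup.of 2
/-- The generator `d` of the rectangle group. -/
def Rd (na nb nc nd : ℕ) : RectGroup na nb nc nd := PresentedGroup.of 3

/-!
Identifying `c` with `a` and `d` with `b` trivializes both rectangle relations. When all exponents
are even, two reflections generating the infinite dihedral group (`DihedralGroup 0`, since
`ZMod 0 = ℤ`) satisfy the remaining relations, and `a b` is then sent to a generator of the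
infinite cyclic group of rotations.
-/

open DihedralGroup

namespace RectGroup

variable {na nb nc nd : ℕ} {G : Type*} [Group G]

/-- The universal property of the rectangle group: four elements of a group `G` satisfying the
defining relations, written as equations, determine a homomorphism to `G`. -/
def lift (a b c d : G) (ha : a ^ na = 1) (hb : b ^ nb = 1) (hc : c ^ nc = 1) (hd : d ^ nd = 1)
    (hbd : b * a⁻¹ = d * c⁻¹) (hcd : c * a⁻¹ = d * b⁻¹) : RectGroup na nb nc nd →* G :=
  PresentedGroup.toGroup (f := ![a, b, c, d]) <| by
    rintro _ (rfl | rfl | rfl | rfl | rfl | rfl) <;> simp [ha, hb, hc, hd, hbd, hcd]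

section lift

variable {a b c d : G} (ha : a ^ na = 1) (hb : b ^ nb = 1) (hc : c ^ nc = 1) (hd : d ^ nd = 1)
  (hbd : b * a⁻¹ = d * c⁻¹) (hcd : c * a⁻¹ = d * b⁻¹)

@[simp]
theorem lift_Ra : lift a b c d ha hb hc hd hbd hcd (Ra na nb nc nd) = a :=
  PresentedGroup.toGroup.of _

@[simp]
theorem lift_Rb : lift a b c d ha hb hc hd hbd hcd (Rb na nb nc nd) = b :=
  PresentedGroup.toGroup.of _

end lift

/-- The homomorphism `a, c ↦ x` and `b, d ↦ y`, under which both rectangle relations become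
trivial, so that only the torsion conditions on `x` and `y` remain. -/
def fold (x y : G) (hxa : x ^ na = 1) (hyb : y ^ nb = 1) (hxc : x ^ nc = 1) (hyd : y ^ nd = 1) :
    RectGroup na nb nc nd →* G :=
  lift x y x y hxa hyb hxc hyd rfl (by simp only [mul_inv_cancel])

theorem fold_Ra_mul_Rb {x y : G} (hxa : x ^ na = 1) (hyb : y ^ nb = 1) (hxc : x ^ nc = 1)
    (hyd : y ^ nd = 1) :
    fold x y hxa hyb hxc hyd (Ra na nb nc nd * Rb na nb nc nd) = x * y := by
  simp only [fold, map_mul, lift_Ra, lift_Rb]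

end RectGroup

theorem dihedralGroup_sr_pow_eq_one_of_even {m n : ℕ} (hn : Even n) (i : ZMod m) : sr i ^ n = 1 :=
  orderOf_dvd_iff_pow_eq_one.mp <| (orderOf_sr i).symm ▸ hn.two_dvd

theorem not_isOfFinOrder_dihedralGroup_sr_zero_mul_sr_one :
    ¬ IsOfFinOrder (sr 0 * sr 1 : DihedralGroup 0) := by
  rw [sr_mul_sr, sub_zero, ← orderOf_eq_zero_iff, orderOf_r_one]

theorem rect_ab_infinite_order_general {na nb nc nd : ℕ}
    (ha : Even na) (hb : Even nb) (hc : Even nc) (hd : Even nd) :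
    ¬ IsOfFinOrder (Ra na nb nc nd * Rb na nb nc nd) := by
  let f : RectGroup na nb nc nd →* DihedralGroup 0 :=
    RectGroup.fold (sr 0) (sr 1)
      (dihedralGroup_sr_pow_eq_one_of_even ha 0) (dihedralGroup_sr_pow_eq_one_of_even hb 1)
      (dihedralGroup_sr_pow_eq_one_of_even hc 0) (dihedralGroup_sr_pow_eq_one_of_even hd 1)
  have hf : f (Ra na nb nc nd * Rb na nb nc nd) = sr 0 * sr 1 := RectGroup.fold_Ra_mul_Rb ..
  intro h
  exact not_isOfFinOrder_dihedralGroup_sr_zero_mul_sr_one (hf ▸ f.isOfFinOrder h)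

/-- If `n_a = n_b = n_c = n_d = 2`, the element `a b` of the rectangle group has
infinite order: the amalgamating subgroup `C = ⟨a b⟩` is infinite cyclic. -/
theorem rect_ab_infinite_order :
    ¬ IsOfFinOrder (Ra 2 2 2 2 * Rb 2 2 2 2) :=
  rect_ab_infinite_order_general even_two even_two even_two even_two
end

section
/- Suppose n_a = n_b = n_c = n_d = 2. Then the group homomorphism from the rectangle group R to the group of isometric self-equivalences of the Euclidean plane ℝ² sending a, b, c, d respectively to the point reflections about A = (0,1), B = (1,1), C = (0,0), D = (1,0) is injective; that is, R acts faithfully on the plane by these rotations through π. -/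
/-- The point of the Euclidean plane with coordinates `(x, y)`. -/
noncomputable def pt (x y : ℝ) : EuclideanSpace ℝ (Fin 2) :=
  (WithLp.equiv 2 (Fin 2 → ℝ)).symm ![x, y]

/-- The point reflection (rotation through `π`) about `P`, `z ↦ 2P − z`, as an isometric
self-equivalence of the Euclidean plane. -/
noncomputable def ptRefl (P : EuclideanSpace ℝ (Fin 2)) :
    EuclideanSpace ℝ (Fin 2) ≃ᵢ EuclideanSpace ℝ (Fin 2) :=
  (AffineIsometryEquiv.pointReflection ℝ P).toIsometryEquiv

/-!
In every rectangle group `b a⁻¹` and `c a⁻¹` commute, both products being `d a⁻¹`, and together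
with `a` they generate. When `a`, `b`, `c` are involutions, conjugation by `a` inverts both, so
each element is `(b a⁻¹)ⁱ (c a⁻¹)ʲ aᵏ`. If `a`, `b`, `c` act as the point reflections about `A`,
`B`, `C`, the first two factors act as the translations by `2i (B - A)` and `2j (C - A)`. For even
`k` the element acts as a translation, trivial only for `i = j = 0` since `B - A` and `C - A` are
independent. For odd `k` it acts as the reflection about `A` followed by a translation; were this
the identity, its value at `A` would show the translation to be trivial, and the reflection itself
would be the identity, whence `2 (B - A) = 0`.
-/

section NormalForm

variable {G : Type*} [Group G] {a b x y : G}

theorem exists_eq_zpow_mul_zpow_mul_zpow_of_mem_closure (hxy : Commute x y)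
    (hx : SemiconjBy a x x⁻¹) (hy : SemiconjBy a y y⁻¹) {g : G}
    (hg : g ∈ Subgroup.closure {a, x, y}) :
    ∃ i j k : ℤ, g = x ^ i * y ^ j * a ^ k := by
  have semiconj_zpow {s : G} (hsx : SemiconjBy s x x⁻¹) (hsy : SemiconjBy s y y⁻¹) (i j : ℤ) :
      s * (x ^ i * y ^ j) = x ^ (-i) * y ^ (-j) * s := by
    simpa only [inv_zpow'] using ((hsx.zpow_right i).mul_right (hsy.zpow_right j)).eq
  have hx' : SemiconjBy a⁻¹ x x⁻¹ := by simpa using hx.inv_symm_left.inv_right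
  have hy' : SemiconjBy a⁻¹ y y⁻¹ := by simpa using hy.inv_symm_left.inv_right
  induction hg using Subgroup.closure_induction_left with
  | one => exact ⟨0, 0, 0, by simp⟩
  | mul_left s hs _ _ ih =>
    obtain ⟨i, j, k, rfl⟩ := ih
    rcases hs with rfl | rfl | rfl
    · exact ⟨-i, -j, 1 + k, by rw [← mul_assoc, semiconj_zpow hx hy, mul_assoc, zpow_one_add]⟩
    · exact ⟨1 + i, j, k, by simp only [zpow_one_add, mul_assoc]⟩
    · exact ⟨i, 1 + j, k, by
        rw [zpow_one_add, ← mul_assoc, ← mul_assoc, ← mul_assoc, (hxy.zpow_left i).eq]⟩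
  | inv_mul_cancel s hs _ _ ih =>
    obtain ⟨i, j, k, rfl⟩ := ih
    rcases hs with rfl | rfl | rfl
    · exact ⟨-i, -j, -1 + k, by
        rw [← mul_assoc, semiconj_zpow hx' hy', mul_assoc, zpow_add, zpow_neg_one]⟩
    · exact ⟨-1 + i, j, k, by simp only [zpow_add, zpow_neg_one, mul_assoc]⟩
    · exact ⟨i, -1 + j, k, by
        rw [zpow_add, zpow_neg_one, ← mul_assoc, ← mul_assoc, ← mul_assoc,
          (hxy.inv_right.zpow_left i).eq]⟩

theorem semiconjBy_mul_inv_of_sq_eq_one (ha : a ^ 2 = 1) (hb : b ^ 2 = 1) :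
    SemiconjBy a (b * a⁻¹) (b * a⁻¹)⁻¹ := by
  have ha' : a⁻¹ = a := inv_eq_of_mul_eq_one_left (by rwa [← sq])
  have hb' : b⁻¹ = b := inv_eq_of_mul_eq_one_left (by rwa [← sq])
  simp only [SemiconjBy, mul_inv_rev, ha', hb', mul_assoc]

end NormalForm

namespace RectGroup

variable (na nb nc nd : ℕ)

theorem Ra_pow : Ra na nb nc nd ^ na = 1 :=
  PresentedGroup.one_of_mem (rels := rectRels na nb nc nd) (x := FreeGroup.of 0 ^ na)
    (by simp [rectRels])

theorem Rb_pow : Rb na nb nc nd ^ nb = 1 :=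
  PresentedGroup.one_of_mem (rels := rectRels na nb nc nd) (x := FreeGroup.of 1 ^ nb)
    (by simp [rectRels])

theorem Rc_pow : Rc na nb nc nd ^ nc = 1 :=
  PresentedGroup.one_of_mem (rels := rectRels na nb nc nd) (x := FreeGroup.of 2 ^ nc)
    (by simp [rectRels])

theorem Rb_mul_inv_Ra_eq :
    Rb na nb nc nd * (Ra na nb nc nd)⁻¹ = Rd na nb nc nd * (Rc na nb nc nd)⁻¹ :=
  PresentedGroup.mk_eq_mk_of_mul_inv_mem (rels := rectRels na nb nc nd)
    (x := FreeGroup.of 1 * (FreeGroup.of 0)⁻¹) (y := FreeGroup.of 3 * (FreeGroup.of 2)⁻¹)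
    (by simp [rectRels])

theorem Rc_mul_inv_Ra_eq :
    Rc na nb nc nd * (Ra na nb nc nd)⁻¹ = Rd na nb nc nd * (Rb na nb nc nd)⁻¹ :=
  PresentedGroup.mk_eq_mk_of_mul_inv_mem (rels := rectRels na nb nc nd)
    (x := FreeGroup.of 2 * (FreeGroup.of 0)⁻¹) (y := FreeGroup.of 3 * (FreeGroup.of 1)⁻¹)
    (by simp [rectRels])

theorem commute_mul_inv_Ra :
    Commute (Rb na nb nc nd * (Ra na nb nc nd)⁻¹) (Rc na nb nc nd * (Ra na nb nc nd)⁻¹) := by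
  rw [commute_iff_eq]
  nth_rewrite 1 [Rb_mul_inv_Ra_eq]
  nth_rewrite 2 [Rc_mul_inv_Ra_eq]
  group

theorem closure_Ra_mul_inv_eq_top :
    Subgroup.closure {Ra na nb nc nd, Rb na nb nc nd * (Ra na nb nc nd)⁻¹,
      Rc na nb nc nd * (Ra na nb nc nd)⁻¹} = ⊤ := by
  set H := Subgroup.closure {Ra na nb nc nd, Rb na nb nc nd * (Ra na nb nc nd)⁻¹,
    Rc na nb nc nd * (Ra na nb nc nd)⁻¹}
  have ha : Ra na nb nc nd ∈ H := Subgroup.subset_closure (by simp)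
  have hx : Rb na nb nc nd * (Ra na nb nc nd)⁻¹ ∈ H := Subgroup.subset_closure (by simp)
  have hy : Rc na nb nc nd * (Ra na nb nc nd)⁻¹ ∈ H := Subgroup.subset_closure (by simp)
  have hb : Rb na nb nc nd ∈ H := by simpa using mul_mem hx ha
  have hc : Rc na nb nc nd ∈ H := by simpa using mul_mem hy ha
  have hd : Rd na nb nc nd ∈ H := by simpa [Rb_mul_inv_Ra_eq] using mul_mem hx hc
  rw [eq_top_iff, ← PresentedGroup.closure_range_of, Subgroup.closure_le]
  rintro _ ⟨i, rfl⟩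
  fin_cases i
  exacts [ha, hb, hc, hd]

theorem exists_eq_zpow_mul_zpow_mul_zpow (g : RectGroup 2 2 2 nd) :
    ∃ i j k : ℤ, g = (Rb 2 2 2 nd * (Ra 2 2 2 nd)⁻¹) ^ i *
      (Rc 2 2 2 nd * (Ra 2 2 2 nd)⁻¹) ^ j * Ra 2 2 2 nd ^ k :=
  exists_eq_zpow_mul_zpow_mul_zpow_of_mem_closure (commute_mul_inv_Ra ..)
    (semiconjBy_mul_inv_of_sq_eq_one (Ra_pow ..) (Rb_pow ..))
    (semiconjBy_mul_inv_of_sq_eq_one (Ra_pow ..) (Rc_pow ..))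
    (closure_Ra_mul_inv_eq_top 2 2 2 nd ▸ Subgroup.mem_top g)

end RectGroup

section PointReflection

variable {V P : Type*} [AddCommGroup V] [AddTorsor V P]

theorem constVAdd_eq_one_iff {v : V} : Equiv.constVAdd P v = 1 ↔ v = 0 := by
  refine ⟨fun h ↦ ?_, fun h ↦ h ▸ Equiv.constVAdd_zero V P⟩
  obtain ⟨p⟩ := AddTorsor.nonempty (G := V) (P := P)
  exact vadd_right_cancel p (by simpa using DFunLike.congr_fun h p)

theorem constVAdd_zpow (v : V) (n : ℤ) :
    Equiv.constVAdd P v ^ n = Equiv.constVAdd P (n • v) :=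
  (map_zpow (Equiv.constVAddHom V P) (.ofAdd v) n).symm

theorem pointReflection_mul_inv_pointReflection (A B : P) :
    Equiv.pointReflection B * (Equiv.pointReflection A)⁻¹ =
      Equiv.constVAdd P (2 • (B -ᵥ A)) := by
  rw [mul_inv_eq_iff_eq_mul]
  ext p
  rw [← vsub_left_cancel_iff (p := A)]
  simp only [Equiv.Perm.coe_mul, Function.comp_apply, Equiv.coe_constVAdd,
    Equiv.pointReflection_apply, vadd_vsub_assoc, vsub_self, ← vsub_sub_vsub_cancel_right B p A,
    ← vsub_sub_vsub_cancel_right A p A]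
  abel

theorem constVAdd_mul_pointReflection_ne_one {v : V} (hv : 2 • v ≠ 0) (w : V) (A : P) :
    Equiv.constVAdd P w * Equiv.pointReflection A ≠ 1 := by
  intro h
  have apply_eq (p : P) : w +ᵥ Equiv.pointReflection A p = p := DFunLike.congr_fun h p
  have hw : w = 0 := vadd_right_cancel A (by simpa using apply_eq A)
  have h_fix : Equiv.pointReflection A (v +ᵥ A) = v +ᵥ A := by simpa [hw] using apply_eq (v +ᵥ A)
  have h_double := Equiv.right_vsub_pointReflection A (v +ᵥ A)
  rw [h_fix, vsub_self, vadd_vsub] at h_double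
  exact hv h_double.symm

end PointReflection

/-- The forgetful homomorphism from self-isometries to permutations, by which an isometric action is
studied through the underlying action on points. -/
def isometryEquivToPerm (X : Type*) [PseudoEMetricSpace X] : (X ≃ᵢ X) →* Equiv.Perm X where
  toFun := IsometryEquiv.toEquiv
  map_one' := rfl
  map_mul' _ _ := rfl

theorem linearIndependent_pt_vsub :
    LinearIndependent ℤ ![pt 1 1 -ᵥ pt 0 1, pt 0 0 -ᵥ pt 0 1] := by
  rw [LinearIndependent.pair_iff]
  intro s t h
  have h0 := congrArg (fun w : EuclideanSpace ℝ (Fin 2) => w 0) h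
  have h1 := congrArg (fun w : EuclideanSpace ℝ (Fin 2) => w 1) h
  simpa [pt] using And.intro h0 h1

theorem rect_acts_faithfully_on_plane_general {V P : Type*} [AddCommGroup V] [AddTorsor V P]
    {nd : ℕ} {A B C : P} (hABC : LinearIndependent ℤ ![B -ᵥ A, C -ᵥ A])
    (φ : RectGroup 2 2 2 nd →* Equiv.Perm P)
    (ha : φ (Ra 2 2 2 nd) = Equiv.pointReflection A)
    (hb : φ (Rb 2 2 2 nd) = Equiv.pointReflection B)
    (hc : φ (Rc 2 2 2 nd) = Equiv.pointReflection C) :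
    Function.Injective φ := by
  rw [LinearIndependent.pair_iff] at hABC
  rw [injective_iff_map_eq_one]
  intro g hg
  obtain ⟨i, j, k, rfl⟩ := RectGroup.exists_eq_zpow_mul_zpow_mul_zpow nd g
  have map_eq : φ ((Rb 2 2 2 nd * (Ra 2 2 2 nd)⁻¹) ^ i * (Rc 2 2 2 nd * (Ra 2 2 2 nd)⁻¹) ^ j) =
      Equiv.constVAdd P ((i * 2) • (B -ᵥ A) + (j * 2) • (C -ᵥ A)) := by
    simp only [map_mul, map_inv, map_zpow, ha, hb, hc, pointReflection_mul_inv_pointReflection,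
      constVAdd_zpow, Equiv.constVAdd_add, mul_smul, ofNat_zsmul]
  have ha_sq : Ra 2 2 2 nd ^ (2 : ℤ) = 1 := mod_cast RectGroup.Ra_pow 2 2 2 nd
  rcases Int.even_or_odd' k with ⟨m, rfl | rfl⟩
  · have h0 : (i * 2) • (B -ᵥ A) + (j * 2) • (C -ᵥ A) = 0 := by
      rw [zpow_mul, ha_sq, one_zpow, mul_one, map_eq] at hg
      exact constVAdd_eq_one_iff.1 hg
    obtain ⟨hi, hj⟩ := hABC _ _ h0
    obtain ⟨rfl, rfl⟩ : i = 0 ∧ j = 0 := by omega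
    simp only [zpow_mul, ha_sq, zpow_zero, one_zpow, mul_one]
  · rw [zpow_add, zpow_mul, ha_sq, one_zpow, one_mul, zpow_one, map_mul, map_eq, ha] at hg
    refine absurd hg (constVAdd_mul_pointReflection_ne_one (v := B -ᵥ A) (fun h ↦ ?_) _ A)
    simpa using hABC 2 0 (by simpa [ofNat_zsmul] using h)

/-- For `n_a = n_b = n_c = n_d = 2`, the homomorphism from the rectangle group `R` to the
isometry group of the Euclidean plane sending `a, b, c, d` to the point reflections
about `A = (0,1)`, `B = (1,1)`, `C = (0,0)`, `D = (1,0)` is injective: `R` acts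
faithfully on the plane by these rotations through `π`. -/
theorem rect_acts_faithfully_on_plane
    (φ : RectGroup 2 2 2 2 →* (EuclideanSpace ℝ (Fin 2) ≃ᵢ EuclideanSpace ℝ (Fin 2)))
    (ha : φ (Ra 2 2 2 2) = ptRefl (pt 0 1))
    (hb : φ (Rb 2 2 2 2) = ptRefl (pt 1 1))
    (hc : φ (Rc 2 2 2 2) = ptRefl (pt 0 0))
    (hd : φ (Rd 2 2 2 2) = ptRefl (pt 1 0)) :
    Function.Injective φ := by
  refine Function.Injective.of_comp (f := isometryEquivToPerm _) ?_
  exact rect_acts_faithfully_on_plane_general linearIndependent_pt_vsub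
    ((isometryEquivToPerm _).comp φ)
    (congrArg IsometryEquiv.toEquiv ha) (congrArg IsometryEquiv.toEquiv hb)
    (congrArg IsometryEquiv.toEquiv hc)
end
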